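/- Let p be an odd prime and let φ : ℚ_pˣ → ℤ_p be a continuous group homomorphism from the multiplicative group of units of ℚ_p to the additive group of ℤ_p, whose restriction to the subgroup 1+pℤ_p is not identically zero. Then there exist an integer t ≥ 0 and an element s ∈ 1+pℤ_p such that the kernel of φ is exactly {ζ·(p^{p^t}·s)^n : ζ ∈ μ_{p−1}, n ∈ ℤ}; that is, the positive integer k of Lemma 3.8 can be taken to be a power of p. -/

import Mathlib

/-!
Raising `1 + p` to `p`-adic powers identifies `ℤ_p` with `1 + pℤ_p` (as `p` is odd), so
`ℚ_pˣ = μ_{p-1} · p^ℤ · (1 + p)^{ℤ_p}`. The homomorphism `φ` kills `μ_{p-1}` because `ℤ_p` is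
torsion-free, and an additive map `ℤ_p → ℤ_p` is automatically `ℤ_p`-linear, so
`φ (ζ · p ^ m · (1 + p) ^ a) = m * d + a * c` with `d = φ p` and `c = φ (1 + p) ≠ 0`.
This vanishes for some `a` precisely when `c ∣ m * d`, and since every nonzero ideal of `ℤ_p` is
generated by a power of `p`, the integers `m` with that property are the multiples of some `p ^ t`.
-/

open IsLocalRing Multiplicative Subgroup

theorem exists_forall_dvd_mul_iff_pow_dvd {R : Type*} [CommRing R] [IsDomain R]
    [IsDiscreteValuationRing R] {ϖ c : R} (hϖ : Irreducible ϖ) (hc : c ≠ 0) (d : R) :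
    ∃ t : ℕ, ∀ x : R, c ∣ x * d ↔ ϖ ^ t ∣ x := by
  have hc_mem : c ∈ (Ideal.span {c}).colon {d} :=
    Submodule.mem_colon_singleton.2 (Ideal.mem_span_singleton.2 (dvd_mul_right c d))
  obtain ⟨t, ht⟩ := IsDiscreteValuationRing.ideal_eq_span_pow_irreducible
    (Submodule.ne_bot_iff _ |>.2 ⟨c, hc_mem, hc⟩) hϖ
  refine ⟨t, fun x => ?_⟩
  rw [← Ideal.mem_span_singleton, ← Ideal.mem_span_singleton, ← ht,
    Submodule.mem_colon_singleton, smul_eq_mul]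

theorem zpowers_eq_ker_powMonoidHom_orderOf {G : Type*} [CommGroup G] [Finite G] [IsCyclic G]
    (g : G) : zpowers g = (powMonoidHom (orderOf g) : G →* G).ker := by
  refine eq_of_le_of_card_ge (zpowers_le.2 (pow_orderOf_eq_one g)) ?_
  rw [IsCyclic.card_powMonoidHom_ker, Nat.card_zpowers]
  exact Nat.gcd_le_right _ (orderOf_pos g)

theorem rootsOfUnity_le_ker {M A : Type*} [CommMonoid M] [Monoid A] [IsMulTorsionFree A]
    (f : Mˣ →* A) {k : ℕ} (hk : k ≠ 0) : rootsOfUnity k M ≤ f.ker := fun ζ hζ => by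
  rw [MonoidHom.mem_ker, ← pow_eq_one_iff_left hk, ← map_pow, (mem_rootsOfUnity k ζ).1 hζ, map_one]

theorem mem_rootsOfUnity_sup_zpowers_iff {M : Type*} [DivisionCommMonoid M] {k : ℕ} (hk : k ≠ 0)
    {g q : Mˣ} :
    q ∈ rootsOfUnity k M ⊔ zpowers g ↔
      ∃ (ζ : M) (n : ℤ), ζ ^ k = 1 ∧ (q : M) = ζ * (g : M) ^ n := by
  rw [mem_sup]
  constructor
  · rintro ⟨ζ, hζ, _, ⟨n, rfl⟩, rfl⟩
    exact ⟨ζ, n, (mem_rootsOfUnity' k ζ).1 hζ, by simp⟩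
  · rintro ⟨ζ, n, hζ, hq⟩
    exact ⟨Units.ofPowEqOne ζ k hζ hk, Units.pow_ofPowEqOne hζ hk, g ^ n, ⟨n, rfl⟩,
      Units.ext (by simp [hq])⟩

section PadicInt

variable {p : ℕ} [Fact p.Prime]

theorem map_padicInt_smul {M N : Type*} [AddCommGroup M] [Module ℤ_[p] M] [AddCommGroup N]
    [Module ℤ_[p] N] [IsHausdorff (maximalIdeal ℤ_[p]) N] (f : M →+ N) (a : ℤ_[p]) (x : M) :
    f (a • x) = a • f x := by
  refine (IsHausdorff.eq_iff_smodEq (I := maximalIdeal ℤ_[p])).2 fun n => ?_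
  obtain ⟨b, hb⟩ : (p : ℤ_[p]) ^ n ∣ a - a.appr n := Ideal.mem_span_singleton.1 (a.appr_spec n)
  have ha : a = a.appr n + (p ^ n : ℕ) * b := by rw [Nat.cast_pow, ← hb, add_sub_cancel]
  have hsub : f (a • x) - a • f x = (p : ℤ_[p]) ^ n • (f (b • x) - b • f x) := by
    conv_lhs => rw [ha]
    simp only [add_smul, mul_smul, Nat.cast_smul_eq_nsmul, map_add, map_nsmul]
    rw [add_sub_add_left_eq_sub, ← smul_sub, ← Nat.cast_smul_eq_nsmul ℤ_[p], Nat.cast_pow]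
  rw [SModEq.sub_mem, hsub]
  exact Submodule.smul_mem_smul (Ideal.pow_mem_pow PadicInt.p_nonunit n) trivial

theorem exists_ker_eq_sup_zpowers {G : Type*} [CommGroup G] {T : Subgroup G} {P : G}
    {E : Multiplicative ℤ_[p] →* G} {f : G →* Multiplicative ℤ_[p]}
    (hG : T ⊔ zpowers P ⊔ E.range = ⊤) (hT : T ≤ f.ker) (hfE : f.comp E ≠ 1) :
    ∃ t : ℕ, ∃ u ∈ E.range, f.ker = T ⊔ zpowers (P ^ p ^ t * u) := by
  set c : ℤ_[p] := (f (E (ofAdd 1))).toAdd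
  set d : ℤ_[p] := (f P).toAdd
  have hE (a : ℤ_[p]) : (f (E (ofAdd a))).toAdd = a * c := by
    simpa using map_padicInt_smul (AddMonoidHom.toMultiplicative.symm (f.comp E)) a 1
  have hc : c ≠ 0 := fun hc => hfE <| MonoidHom.ext fun a => toAdd.injective <| by
    simpa [hc] using hE a.toAdd
  obtain ⟨t, ht⟩ := exists_forall_dvd_mul_iff_pow_dvd PadicInt.irreducible_p hc d
  obtain ⟨b, hb⟩ := (ht _).2 dvd_rfl
  refine ⟨t, E (ofAdd (-b)), ⟨_, rfl⟩, le_antisymm (fun x hx => ?_) (sup_le hT (zpowers_le.2 ?_))⟩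
  · obtain ⟨_, hζP, _, ⟨a, rfl⟩, rfl⟩ := mem_sup.1 (hG ▸ mem_top x)
    obtain ⟨ζ, hζ, _, ⟨m, rfl⟩, rfl⟩ := mem_sup.1 hζP
    have hma : m * d + a.toAdd * c = 0 := by
      have hζ1 : f ζ = 1 := hT hζ
      rw [MonoidHom.mem_ker, map_mul, map_mul, hζ1, one_mul, map_zpow] at hx
      simpa [d, ← hE] using congrArg toAdd hx
    obtain ⟨n, rfl⟩ : (p ^ t : ℤ) ∣ m := by
      rw [← PadicInt.pow_p_dvd_int_iff, ← ht]
      exact ⟨-a.toAdd, by linear_combination hma⟩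
    have ha : a = ofAdd (-b) ^ n := toAdd.injective <| mul_right_cancel₀ hc <| by
      simp only [toAdd_zpow, toAdd_ofAdd, zsmul_eq_mul]
      push_cast at hma
      linear_combination hma - n * hb
    have hx_eq : ζ * P ^ ((p : ℤ) ^ t * n) * E a = ζ * (P ^ p ^ t * E (ofAdd (-b))) ^ n := by
      rw [mul_zpow, ← map_zpow, ← ha, ← zpow_natCast, ← zpow_mul, Nat.cast_pow, mul_assoc]
    exact hx_eq ▸ mul_mem_sup hζ (zpow_mem_zpowers _ n)
  · refine toAdd.injective ?_
    rw [map_mul, map_pow, toAdd_mul, toAdd_pow, hE, toAdd_one, nsmul_eq_mul, Nat.cast_pow, hb]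
    ring

end PadicInt

section OnePlusP

variable (p : ℕ) [Fact p.Prime]

theorem tendsto_p_pow_atTop_nhds_zero :
    Filter.Tendsto ((p : ℤ_[p]) ^ ·) Filter.atTop (nhds 0) :=
  tendsto_pow_atTop_nhds_zero_iff_norm_lt_one.2 ((PadicInt.norm_lt_one_iff_dvd _).2 dvd_rfl)

/-- The exponential `a ↦ (1 + p) ^ a` with `p`-adic exponents, that is, the continuous extension
to `ℤ_p` of `n ↦ (1 + p) ^ n`. -/
noncomputable def onePlusPPow : Multiplicative ℤ_[p] →* ℤ_[p]ˣ :=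
  (PadicInt.addChar_of_value_at_one (p : ℤ_[p])
    (tendsto_p_pow_atTop_nhds_zero p)).toMonoidHom.toHomUnits

variable {p}

theorem continuous_onePlusPPow :
    Continuous fun a : ℤ_[p] => (onePlusPPow p (ofAdd a) : ℤ_[p]) :=
  PadicInt.continuous_addChar_of_value_at_one (tendsto_p_pow_atTop_nhds_zero p)

theorem onePlusPPow_natCast (n : ℕ) :
    (onePlusPPow p (ofAdd (n : ℤ_[p])) : ℤ_[p]) = (1 + p) ^ n := by
  have h1 : (onePlusPPow p (ofAdd 1) : ℤ_[p]) = 1 + p :=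
    PadicInt.addChar_of_value_at_one_def (tendsto_p_pow_atTop_nhds_zero p)
  rw [← nsmul_one, ofAdd_nsmul, map_pow, Units.val_pow_eq_pow_val, h1]

theorem dvd_onePlusPPow_sub_one (a : Multiplicative ℤ_[p]) :
    (p : ℤ_[p]) ∣ onePlusPPow p a - 1 := by
  rw [← PadicInt.norm_lt_one_iff_dvd, ← dist_eq_norm, ← Metric.mem_ball]
  refine PadicInt.denseRange_natCast.induction_on
    (p := fun a => (onePlusPPow p (ofAdd a) : ℤ_[p]) ∈ Metric.ball 1 1) a.toAdd
    ((IsUltrametricDist.isClosed_ball 1 1).preimage continuous_onePlusPPow) fun n => ?_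
  rw [Metric.mem_ball, dist_eq_norm, PadicInt.norm_lt_one_iff_dvd, onePlusPPow_natCast]
  simpa using sub_dvd_pow_sub_pow (1 + p : ℤ_[p]) 1 n

theorem exists_pow_dvd_sub_one_add_pow (hp2 : p ≠ 2) {x : ℤ_[p]ˣ} (hx : (p : ℤ_[p]) ∣ x - 1)
    (n : ℕ) : ∃ m : ℕ, (p : ℤ_[p]) ^ (n + 1) ∣ x - (1 + p) ^ m := by
  have hp : p.Prime := Fact.out
  have := ZMod.isCyclic_units_of_prime_pow p hp hp2 (n + 1)
  let reduce : ℤ_[p]ˣ →* (ZMod (p ^ (n + 1)))ˣ :=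
    Units.map (PadicInt.toZModPow (p := p) (n + 1) : _ →* _)
  let g : (ZMod (p ^ (n + 1)))ˣ := reduce (onePlusPPow p (ofAdd 1))
  have hg : (g : ZMod (p ^ (n + 1))) = 1 + p := by
    simpa [g, reduce] using congrArg (PadicInt.toZModPow (n + 1)) (onePlusPPow_natCast (p := p) 1)
  have hx_mem : reduce x ∈ zpowers g := by
    have hpow : (p : ℤ_[p]) ^ (n + 1) ∣ x ^ p ^ n - 1 := by
      simpa using dvd_sub_pow_of_dvd_sub hx n
    rw [← Ideal.mem_span_singleton, ← PadicInt.ker_toZModPow, RingHom.mem_ker, map_sub,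
      sub_eq_zero, map_one, map_pow] at hpow
    rw [zpowers_eq_ker_powMonoidHom_orderOf, ← orderOf_units, hg,
      ZMod.orderOf_one_add_prime hp hp2]
    exact Units.ext hpow
  obtain ⟨m, hm⟩ := mem_powers_iff_mem_zpowers.2 hx_mem
  refine ⟨m, ?_⟩
  rw [← Ideal.mem_span_singleton, ← PadicInt.ker_toZModPow, RingHom.mem_ker, map_sub, sub_eq_zero]
  have hval := congrArg Units.val hm
  simpa [hg, reduce] using hval.symm

theorem mem_range_onePlusPPow_iff (hp2 : p ≠ 2) {x : ℤ_[p]ˣ} :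
    x ∈ (onePlusPPow p).range ↔ (p : ℤ_[p]) ∣ x - 1 := by
  refine ⟨?_, fun hx => ?_⟩
  · rintro ⟨a, rfl⟩
    exact dvd_onePlusPPow_sub_one a
  have hclosed : IsClosed (Set.range fun a : ℤ_[p] => (onePlusPPow p (ofAdd a) : ℤ_[p])) :=
    (isCompact_range continuous_onePlusPPow).isClosed
  obtain ⟨a, ha⟩ : (x : ℤ_[p]) ∈ Set.range fun a : ℤ_[p] => (onePlusPPow p (ofAdd a) : ℤ_[p]) := by
    refine hclosed.closure_subset (Metric.mem_closure_range_iff.2 fun ε hε => ?_)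
    obtain ⟨n, hn⟩ := PadicInt.exists_pow_neg_lt p hε
    obtain ⟨m, hm⟩ := exists_pow_dvd_sub_one_add_pow hp2 hx n
    refine ⟨m, lt_of_le_of_lt ?_ hn⟩
    rw [onePlusPPow_natCast, dist_eq_norm, PadicInt.norm_le_pow_iff_mem_span_pow,
      Ideal.mem_span_singleton]
    exact (pow_dvd_pow _ n.le_succ).trans hm
  exact ⟨ofAdd a, Units.ext ha⟩

theorem rootsOfUnity_sup_range_onePlusPPow (hp2 : p ≠ 2) :
    rootsOfUnity (p - 1) ℤ_[p] ⊔ (onePlusPPow p).range = ⊤ := by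
  have hp : p.Prime := Fact.out
  refine eq_top_iff.2 fun x _ => ?_
  obtain ⟨a, ha⟩ : x ^ (p - 1) ∈ (onePlusPPow p).range := by
    have hx0 : PadicInt.toZMod (x : ℤ_[p]) ≠ 0 := (x.isUnit.map PadicInt.toZMod).ne_zero
    rw [mem_range_onePlusPPow_iff hp2, ← Ideal.mem_span_singleton,
      ← PadicInt.maximalIdeal_eq_span_p, ← PadicInt.ker_toZMod, RingHom.mem_ker, map_sub, map_one,
      Units.val_pow_eq_pow_val, map_pow, ZMod.pow_card_sub_one_eq_one hx0, sub_self]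
  obtain ⟨e, he⟩ : ∃ e : ℤ_[p], ((p - 1 : ℕ) : ℤ_[p]) * e = 1 := by
    refine (PadicInt.isUnit_iff.2 (PadicInt.norm_natCast_eq_one_iff.2 ?_)).exists_right_inv
    exact (Nat.coprime_self_sub_right hp.one_le).2 (Nat.coprime_one_right p)
  have hpow : onePlusPPow p (ofAdd (e * a.toAdd)) ^ (p - 1) = x ^ (p - 1) := by
    rw [← map_pow, ← ofAdd_nsmul, nsmul_eq_mul, ← mul_assoc, he, one_mul, ofAdd_toAdd, ha]
  rw [← div_mul_cancel x (onePlusPPow p (ofAdd (e * a.toAdd)))]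
  refine mul_mem_sup ?_ ⟨_, rfl⟩
  rw [mem_rootsOfUnity, div_pow, hpow, div_self']

end OnePlusP

section Padic

variable (p : ℕ) [Fact p.Prime]

/-- The prime `p` as an element of `ℚ_pˣ`. -/
noncomputable def padicUniformizer : ℚ_[p]ˣ := Units.mk0 p (NeZero.ne _)

/-- The inclusion of the unit group `ℤ_pˣ` into `ℚ_pˣ`. -/
noncomputable def padicIntUnitsHom : ℤ_[p]ˣ →* ℚ_[p]ˣ :=
  Units.map (PadicInt.Coe.ringHom (p := p) : _ →* _)

theorem coe_padicIntUnitsHom (x : ℤ_[p]ˣ) :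
    (padicIntUnitsHom p x : ℚ_[p]) = ((x : ℤ_[p]) : ℚ_[p]) := rfl

theorem zpowers_padicUniformizer_sup_range :
    zpowers (padicUniformizer p) ⊔ (padicIntUnitsHom p).range = ⊤ := by
  refine eq_top_iff.2 fun q _ => ?_
  let m : ℤ := (q : ℚ_[p]).valuation
  have hnorm : ‖((padicUniformizer p ^ m)⁻¹ * q : ℚ_[p])‖ = 1 := by
    have hp0 : (p : ℝ) ≠ 0 := NeZero.ne _
    rw [Units.val_inv_eq_inv_val, Units.val_zpow_eq_zpow_val, padicUniformizer, Units.val_mk0,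
      norm_mul, norm_inv, Padic.norm_p_zpow, Padic.norm_eq_zpow_neg_valuation q.ne_zero,
      inv_mul_cancel₀ (zpow_ne_zero _ hp0)]
  rw [← mul_inv_cancel_left (padicUniformizer p ^ m) q]
  exact mul_mem_sup ⟨m, rfl⟩ ⟨PadicInt.mkUnits hnorm, Units.ext rfl⟩

variable {p}

theorem rootsOfUnity_sup_zpowers_padicUniformizer_sup_range (hp2 : p ≠ 2) :
    rootsOfUnity (p - 1) ℚ_[p] ⊔ zpowers (padicUniformizer p) ⊔
      ((padicIntUnitsHom p).comp (onePlusPPow p)).range = ⊤ := by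
  have hroots : (rootsOfUnity (p - 1) ℤ_[p]).map (padicIntUnitsHom p) ≤
      rootsOfUnity (p - 1) ℚ_[p] := map_rootsOfUnity _ _
  rw [eq_top_iff, ← zpowers_padicUniformizer_sup_range, MonoidHom.range_eq_map,
    ← rootsOfUnity_sup_range_onePlusPPow hp2, Subgroup.map_sup, MonoidHom.range_comp,
    sup_comm (rootsOfUnity _ _), sup_assoc]
  gcongr

theorem mem_range_padicIntUnitsHom_comp_onePlusPPow_iff (hp2 : p ≠ 2) {u : ℚ_[p]ˣ} :
    u ∈ ((padicIntUnitsHom p).comp (onePlusPPow p)).range ↔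
      ∃ y : ℤ_[p], (u : ℚ_[p]) = 1 + p * y := by
  rw [MonoidHom.range_comp]
  constructor
  · rintro ⟨x, hx, rfl⟩
    obtain ⟨y, hy⟩ := (mem_range_onePlusPPow_iff hp2).1 hx
    exact ⟨y, by rw [coe_padicIntUnitsHom, eq_add_of_sub_eq' hy]; push_cast; rfl⟩
  · rintro ⟨y, hy⟩
    obtain ⟨x, hx⟩ : IsUnit (1 + p * y : ℤ_[p]) := by
      refine isUnit_of_mem_nonunits_one_sub_self _ (PadicInt.mem_nonunits.2 ?_)
      exact (PadicInt.norm_lt_one_iff_dvd _).2 ⟨-y, by ring⟩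
    refine ⟨x, (mem_range_onePlusPPow_iff hp2).2 ⟨y, by rw [hx, add_sub_cancel_left]⟩, ?_⟩
    exact Units.ext (by rw [coe_padicIntUnitsHom, hx, hy]; push_cast; rfl)

theorem exists_ker_eq_rootsOfUnity_sup_zpowers (hp2 : p ≠ 2)
    {φ : ℚ_[p]ˣ →* Multiplicative ℤ_[p]}
    (hφ : ∃ u : ℚ_[p]ˣ, (∃ y : ℤ_[p], (u : ℚ_[p]) = 1 + p * y) ∧ φ u ≠ 1) :
    ∃ (t : ℕ) (u : ℚ_[p]ˣ), (∃ y : ℤ_[p], (u : ℚ_[p]) = 1 + p * y) ∧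
      φ.ker = rootsOfUnity (p - 1) ℚ_[p] ⊔ zpowers (padicUniformizer p ^ p ^ t * u) := by
  simp only [← mem_range_padicIntUnitsHom_comp_onePlusPPow_iff hp2] at hφ ⊢
  obtain ⟨_, ⟨a, rfl⟩, ha⟩ := hφ
  exact exists_ker_eq_sup_zpowers (rootsOfUnity_sup_zpowers_padicUniformizer_sup_range hp2)
    (rootsOfUnity_le_ker φ (Nat.sub_ne_zero_of_lt (Fact.out : p.Prime).one_lt))
    fun h => ha (DFunLike.congr_fun h a)

end Padic

theorem stmt_1_general (p : ℕ) [Fact p.Prime] (hp : Odd p)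
    (φ : ℚ_[p]ˣ → ℤ_[p])
    (hhom : ∀ a b : ℚ_[p]ˣ, φ (a * b) = φ a + φ b)
    (hnt : ∃ u : ℚ_[p]ˣ, (∃ y : ℤ_[p], (u : ℚ_[p]) = 1 + p * y) ∧ φ u ≠ 0) :
    ∃ (t : ℕ) (s : ℤ_[p]), (∃ y : ℤ_[p], s = 1 + p * y) ∧
      ∀ q : ℚ_[p]ˣ, φ q = 0 ↔
        ∃ (ζ : ℚ_[p]) (n : ℤ), ζ ^ (p - 1) = 1 ∧
          (q : ℚ_[p]) = ζ * ((p : ℚ_[p]) ^ (p ^ t) * (s : ℚ_[p])) ^ n := by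
  have hp2 : p ≠ 2 := hp.ne_two_of_dvd_nat dvd_rfl
  have hp1 : p - 1 ≠ 0 := Nat.sub_ne_zero_of_lt (Fact.out : p.Prime).one_lt
  let Φ : ℚ_[p]ˣ →* Multiplicative ℤ_[p] := MonoidHom.mk' (fun q => ofAdd (φ q)) hhom
  obtain ⟨t, u, ⟨y, hy⟩, hker⟩ := exists_ker_eq_rootsOfUnity_sup_zpowers (φ := Φ) hp2 hnt
  refine ⟨t, 1 + p * y, ⟨y, rfl⟩, fun q => ?_⟩
  have hgen : ((padicUniformizer p ^ p ^ t * u : ℚ_[p]ˣ) : ℚ_[p]) =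
      (p : ℚ_[p]) ^ p ^ t * ((1 + p * y : ℤ_[p]) : ℚ_[p]) := by
    simp [padicUniformizer, hy]
  rw [← hgen, ← mem_rootsOfUnity_sup_zpowers_iff hp1, ← hker]
  rfl

/-- Refinement of Lemma 3.8 of the paper (cf. Greenberg's Example 4): the kernel of a
continuous homomorphism `φ : ℚ_pˣ → (ℤ_p, +)` which is nontrivial on the principal
units `1 + pℤ_p` has the form `μ_{p-1} × (p^{p^t}·s)^ℤ` with `t ≥ 0` and
`s ∈ 1 + pℤ_p`; i.e. the exponent `k` can be taken to be a power of `p`. -/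
theorem stmt_1 (p : ℕ) [Fact p.Prime] (hp : Odd p)
    (φ : ℚ_[p]ˣ → ℤ_[p])
    (hhom : ∀ a b : ℚ_[p]ˣ, φ (a * b) = φ a + φ b)
    (hcont : Continuous φ)
    (hnt : ∃ u : ℚ_[p]ˣ, (∃ y : ℤ_[p], (u : ℚ_[p]) = 1 + p * y) ∧ φ u ≠ 0) :
    ∃ (t : ℕ) (s : ℤ_[p]), 0 ≤ t ∧ (∃ y : ℤ_[p], s = 1 + p * y) ∧
      ∀ q : ℚ_[p]ˣ, φ q = 0 ↔
        ∃ (ζ : ℚ_[p]) (n : ℤ), ζ ^ (p - 1) = 1 ∧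
          (q : ℚ_[p]) = ζ * ((p : ℚ_[p]) ^ (p ^ t) * (s : ℚ_[p])) ^ n := by
  obtain ⟨t, s, h⟩ := stmt_1_general p hp φ hhom hnt
  exact ⟨t, s, t.zero_le, h⟩
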